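/- Let (G,T) be a bipartite graft, F a minimum join of (G,T), and r ∈ V(G). Let K be a decapital distance component of (G,T) with respect to r, with F-root r_K. Let r' ∈ V(G)\V(K) be K-congruent to r, and set d := dist_F(r', r_K) − dist_F(r, r_K). Then for every x ∈ V(K), dist_F(r', x) = dist_F(r, x) + d. -/

import Mathlib

/-!
The idea is to replace paths by edge sets with a prescribed boundary modulo 2. If `F` is a minimum
join, then `|F| + dist_F(r, x)` is the minimum size of an edge set `J` whose boundary is that of
`F` plus the points `r` and `x` (`IsMinSet.card_opt`). Distance components become components of
the level sets `Sub` of this minimum size, with `r` encoded in the fixed part `τ` of the boundary.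

Moving the end of an optimal `J` along an edge inside a component `D` of a level set only changes
`J` inside `D` (`step`, `transport`). Therefore an optimal `J` with its end in `D` does not cross
`D` (`no_cross`), and any optimal `J` crosses `D` at most once (`cross_unique`, Sebő's theorem). In
a bipartite graph the two ends of an edge have different levels, so each edge between feasible
vertices crosses exactly one component. Since optimal edge sets cross each component as rarely as
parity permits, counting crossings bounds the number of edges inside `K` (`count_inside`) and
outside `K` (`count_outside`) separately.

Now take a path from `r'` to `x ∈ K`, and let `A` be its part up to the first vertex `z` of `K`.
The rest of the path weighs at least `dist_F(r, x) - dist_F(r, r_K)` by the counting bounds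
(`path_bound`), while replacing the part inside `K` of `F ∆ A` by that of an optimal edge set with
end `z` gives `dist_F(r', r_K) ≤ w_F(A)` (`exchange`). This is the lower bound for `dist_F(r', x)`.
For the upper bound, take a shortest path from `r'` to `r_K`. If it entered `K` by an edge other
than the beam, the exchanged edge set would contain the beam, and deleting the beam would give
`dist_F(r', s_K) < dist_F(r', r_K)`, against congruence. So it enters by the beam at `z = r_K`, and
exchanging the part inside `K` for that of an optimal edge set with end `x` gives the bound.
-/

namespace TightCuts

open SimpleGraph

variable {V : Type*}

/-- `(G, T)` is a graft: every connected component of `G` contains an even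
number of vertices of `T`. -/
def IsGraft (G : SimpleGraph V) (T : Set V) : Prop :=
  ∀ c : G.ConnectedComponent, Even ((T ∩ {v | G.connectedComponentMk v = c}).ncard)

/-- `F` is a join of the graft `(G, T)`: a set of edges such that a vertex is
incident with an odd number of edges of `F` exactly when it lies in `T`. -/
def IsJoin (G : SimpleGraph V) (T : Set V) (F : Set (Sym2 V)) : Prop :=
  F ⊆ G.edgeSet ∧ ∀ v : V, (Odd ({e ∈ F | v ∈ e}).ncard ↔ v ∈ T)

/-- `ν(G, T)`: the minimum size of a join of `(G, T)`. -/
noncomputable def nu (G : SimpleGraph V) (T : Set V) : ℕ :=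
  sInf {n | ∃ F : Set (Sym2 V), IsJoin G T F ∧ F.ncard = n}

/-- `F` is a minimum join of `(G, T)`. -/
def IsMinJoin (G : SimpleGraph V) (T : Set V) (F : Set (Sym2 V)) : Prop :=
  IsJoin G T F ∧ F.ncard = nu G T

open Classical in
/-- The `F`-weight of an edge: `-1` if the edge lies in `F`, `+1` otherwise. -/
noncomputable def edgeWt (F : Set (Sym2 V)) (e : Sym2 V) : ℤ :=
  if e ∈ F then -1 else 1

/-- The `F`-weight of a walk: the sum of the `F`-weights of its edges. -/
noncomputable def walkWt (F : Set (Sym2 V)) {G : SimpleGraph V} {x y : V}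
    (p : G.Walk x y) : ℤ :=
  (p.edges.map (edgeWt F)).sum

/-- The `F`-distance between `x` and `y`: the minimum `F`-weight of a path
between `x` and `y`. -/
noncomputable def distF (G : SimpleGraph V) (F : Set (Sym2 V)) (x y : V) : ℤ :=
  sInf {n : ℤ | ∃ p : G.Walk x y, p.IsPath ∧ walkWt F p = n}

/-- `K` is (the vertex set of) a connected component of the subgraph of `G`
induced by `U`. -/
def IsComponentOf (G : SimpleGraph V) (U K : Set V) : Prop :=
  K.Nonempty ∧ K ⊆ U ∧ (G.induce K).Connected ∧
    ∀ x ∈ K, ∀ y ∈ U, G.Adj x y → y ∈ K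

/-- `K` is a distance component of the graft with respect to root `r` at level `i`
(with respect to a minimum join `F`): `i` is attained as an `F`-distance from `r`,
and `K` is a connected component of the subgraph induced by the vertices at
`F`-distance at most `i` from `r`. -/
def IsDistCompAt (G : SimpleGraph V) (F : Set (Sym2 V)) (r : V) (i : ℤ) (K : Set V) : Prop :=
  (∃ x, distF G F r x = i) ∧ IsComponentOf G {x | distF G F r x ≤ i} K

/-- `K` is a decapital distance component with respect to root `r`: a distance
component (at some level) not containing `r`. -/
def IsDecapDistComp (G : SimpleGraph V) (F : Set (Sym2 V)) (r : V) (K : Set V) : Prop :=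
  ∃ i : ℤ, IsDistCompAt G F r i K ∧ r ∉ K

/-- The edge cut `δ_G(K)`: edges of `G` with exactly one end in `K`. -/
def cutEdges (G : SimpleGraph V) (K : Set V) : Set (Sym2 V) :=
  {e | e ∈ G.edgeSet ∧ ∃ x y, e = s(x, y) ∧ x ∈ K ∧ y ∉ K}

/-- An edge is allowed in `(G, T)` if some minimum join contains it. -/
def Allowed (G : SimpleGraph V) (T : Set V) (e : Sym2 V) : Prop :=
  ∃ F, IsMinJoin G T F ∧ e ∈ F

/-- Two vertices are factor-connected if there is a walk between them all of
whose edges are allowed. -/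
def FactorConnected (G : SimpleGraph V) (T : Set V) (u v : V) : Prop :=
  ∃ p : G.Walk u v, ∀ e ∈ p.edges, Allowed G T e

/-- `C` is (the vertex set of) a factor-component of `(G, T)`: an equivalence
class of factor-connectivity. -/
def IsFactorComponent (G : SimpleGraph V) (T : Set V) (C : Set V) : Prop :=
  ∃ v, C = {u | FactorConnected G T u v}

/-- The Kotzig–Lovász relation: `u ∼ v` iff `u = v`, or `u` and `v` are
factor-connected (hence in the same factor-component) and
`ν(G, T) = ν(G, T Δ {u, v})`. -/
def klRel (G : SimpleGraph V) (T : Set V) (u v : V) : Prop :=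
  u = v ∨ (FactorConnected G T u v ∧ nu G T = nu G (symmDiff T {u, v}))

/-- `S` is a Kotzig–Lovász class of `(G, T)`. -/
def IsKLClass (G : SimpleGraph V) (T : Set V) (S : Set V) : Prop :=
  ∃ v, S = {u | klRel G T u v}

/-- `A(K)` for a distance component `K` at level `i`: the vertices of `K` at
`F`-distance exactly `i` from `r`. -/
def AK (G : SimpleGraph V) (F : Set (Sym2 V)) (r : V) (i : ℤ) (K : Set V) : Set V :=
  K ∩ {x | distF G F r x = i}

/-- `D(K) = V(K) \ A(K)`. -/
def DK (G : SimpleGraph V) (F : Set (Sym2 V)) (r : V) (i : ℤ) (K : Set V) : Set V :=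
  K \ AK G F r i K

/-- `S` is the root class of `K`: a Kotzig–Lovász class containing all ends in
`K` of allowed edges of the cut `δ_G(K)`. -/
def IsRootClass (G : SimpleGraph V) (T : Set V) (K S : Set V) : Prop :=
  IsKLClass G T S ∧ ∀ e ∈ cutEdges G K, Allowed G T e → ∀ u ∈ e, u ∈ K → u ∈ S

/-- `S` is the antiroot class of `K`: a Kotzig–Lovász class containing all ends
outside `K` of allowed edges of the cut `δ_G(K)`. -/
def IsAntirootClass (G : SimpleGraph V) (T : Set V) (K S : Set V) : Prop :=
  IsKLClass G T S ∧ ∀ e ∈ cutEdges G K, Allowed G T e → ∀ u ∈ e, u ∉ K → u ∈ S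

/-- The family `𝒜(K)`: the root fragment `K ∩ S_K` together with all
Kotzig–Lovász classes other than `S_K` that contain a vertex of `A(K)`. -/
def famA (G : SimpleGraph V) (T : Set V) (F : Set (Sym2 V)) (r : V) (i : ℤ)
    (K S_K : Set V) : Set (Set V) :=
  insert (K ∩ S_K) {S | IsKLClass G T S ∧ S ≠ S_K ∧ (S ∩ AK G F r i K).Nonempty}

/-- `L` is adjacent to a vertex of `S` by an allowed edge. -/
def AdjAllowed (G : SimpleGraph V) (T : Set V) (L S : Set V) : Prop :=
  ∃ x ∈ L, ∃ s ∈ S, G.Adj x s ∧ Allowed G T s(x, s)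

/-- `𝒩_K(S)`: the family of connected components of `G[D(K)]` adjacent to a
vertex of `S` by an allowed edge. -/
def NKfam (G : SimpleGraph V) (T : Set V) (F : Set (Sym2 V)) (r : V) (i : ℤ)
    (K S : Set V) : Set (Set V) :=
  {L | IsComponentOf G (DK G F r i K) L ∧ AdjAllowed G T L S}

/-- `U_K(S)`: the union of the vertex sets of the members of `𝒩_K(S)`. -/
def UK (G : SimpleGraph V) (T : Set V) (F : Set (Sym2 V)) (r : V) (i : ℤ)
    (K S : Set V) : Set V :=
  ⋃₀ NKfam G T F r i K S

/-- `X` is an `F`-negative set for `S`: `X` is disjoint from `S` and every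
`x ∈ X` admits a path of negative `F`-weight from `x` to a vertex of `S` whose
vertices, except the end in `S`, all lie in `X`. -/
def IsNegSet (G : SimpleGraph V) (F : Set (Sym2 V)) (S X : Set V) : Prop :=
  X ⊆ Sᶜ ∧ ∀ x ∈ X, ∃ y ∈ S, ∃ p : G.Walk x y, p.IsPath ∧ walkWt F p < 0 ∧
    ∀ v ∈ p.support, v ≠ y → v ∈ X

/-- The maximum `F`-negative set for `S`: the union of all `F`-negative sets
for `S`. -/
def maxNegSet (G : SimpleGraph V) (F : Set (Sym2 V)) (S : Set V) : Set V :=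
  ⋃₀ {X | IsNegSet G F S X}

/-- The maximum `F`-negative set for `S` avoiding `Y`. -/
def maxNegSetAvoiding (G : SimpleGraph V) (F : Set (Sym2 V)) (S Y : Set V) : Set V :=
  ⋃₀ {X | IsNegSet G F S X ∧ Disjoint X Y}

/-! ### Boundaries of edge sets -/

/-- The boundary modulo 2 of a finite edge set: the parity of the degree at each vertex. -/
def bd [DecidableEq V] (J : Finset (Sym2 V)) (v : V) : ZMod 2 :=
  ∑ e ∈ J, if v ∈ e then 1 else 0

/-- The indicator of the vertex `x`, with values in `ZMod 2`. -/
def pt [DecidableEq V] (x : V) (v : V) : ZMod 2 := if v = x then 1 else 0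

/-- Both ends of `e` lie in `K`. -/
def Inside (K : Set V) (e : Sym2 V) : Prop := ∀ v ∈ e, v ∈ K

/-- Exactly one end of `e` lies in `K`. -/
def Crosses (K : Set V) (e : Sym2 V) : Prop := (∃ v ∈ e, v ∈ K) ∧ ∃ v ∈ e, v ∉ K

/-- The total `F`-weight of a finite edge set. -/
noncomputable def wt (F B : Finset (Sym2 V)) : ℤ := ∑ e ∈ B, edgeWt (F : Set (Sym2 V)) e

section Boundary

variable [DecidableEq V]

theorem zmod2_add_self (a : ZMod 2) : a + a = 0 := CharTwo.add_self_eq_zero a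

theorem bd_symmDiff (A B : Finset (Sym2 V)) (v : V) :
    bd (symmDiff A B) v = bd A v + bd B v := by
  unfold bd
  rw [symmDiff_def, Finset.sup_eq_union, Finset.sum_union disjoint_sdiff_sdiff,
    ← Finset.sum_inter_add_sum_sdiff A B, ← Finset.sum_inter_add_sum_sdiff B A,
    Finset.inter_comm B A]
  linear_combination -zmod2_add_self (∑ e ∈ A ∩ B, if v ∈ e then (1 : ZMod 2) else 0)

theorem card_symmDiff (A B : Finset (Sym2 V)) :
    ((symmDiff A B).card : ℤ) = A.card + wt A B := by
  have h1 : wt A B = (B \ A).card - (A ∩ B).card := by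
    unfold wt
    rw [← Finset.sum_inter_add_sum_sdiff B A]
    have e1 : ∑ e ∈ B ∩ A, edgeWt (A : Set (Sym2 V)) e = ∑ e ∈ B ∩ A, (-1 : ℤ) :=
      Finset.sum_congr rfl fun e he => by simp [edgeWt, (Finset.mem_inter.1 he).2]
    have e2 : ∑ e ∈ B \ A, edgeWt (A : Set (Sym2 V)) e = ∑ e ∈ B \ A, (1 : ℤ) :=
      Finset.sum_congr rfl fun e he => by simp [edgeWt, (Finset.mem_sdiff.1 he).2]
    rw [e1, e2, Finset.inter_comm]
    simp
    ring
  have h2 := Finset.card_inter_add_card_sdiff A B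
  rw [symmDiff_def, Finset.sup_eq_union, Finset.card_union_of_disjoint disjoint_sdiff_sdiff, h1]
  push_cast
  omega

theorem symmDiff_sub {G : SimpleGraph V} {A B : Finset (Sym2 V)}
    (hA : ∀ e ∈ A, e ∈ G.edgeSet) (hB : ∀ e ∈ B, e ∈ G.edgeSet) :
    ∀ e ∈ symmDiff A B, e ∈ G.edgeSet := by
  intro e he
  rcases Finset.mem_symmDiff.1 he with h | h
  · exact hA e h.1
  · exact hB e h.1

theorem wt_union (F : Finset (Sym2 V)) {A B : Finset (Sym2 V)} (h : Disjoint A B) :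
    wt F (A ∪ B) = wt F A + wt F B := Finset.sum_union h

/-- Two edge sets that differ at every edge of `B` give opposite weights to `B`. -/
theorem wt_neg {A A' B : Finset (Sym2 V)} (h : ∀ e ∈ B, (e ∈ A ↔ e ∉ A')) :
    wt A B = - wt A' B := by
  unfold wt
  rw [← Finset.sum_neg_distrib]
  refine Finset.sum_congr rfl fun e he => ?_
  by_cases h1 : e ∈ A' <;> simp [edgeWt, h e he, h1]

theorem bd_singleton {x y : V} (h : x ≠ y) (v : V) : bd {s(x, y)} v = pt x v + pt y v := by
  simp only [bd, pt, Finset.sum_singleton, Sym2.mem_iff]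
  by_cases h1 : v = x <;> by_cases h2 : v = y <;> simp_all

theorem bd_filter (J : Finset (Sym2 V)) (p : Sym2 V → Prop) [DecidablePred p] (v : V) :
    bd J v = bd (J.filter p) v + bd (J.filter fun e => ¬ p e) v :=
  (Finset.sum_filter_add_sum_filter_not J p _).symm

theorem bd_congr {A B : Finset (Sym2 V)} {v : V} (h : ∀ e, v ∈ e → (e ∈ A ↔ e ∈ B)) :
    bd A v = bd B v := by
  have : ∀ C : Finset (Sym2 V), bd C v = ((C.filter fun e => v ∈ e).card : ZMod 2) := by
    intro C; simp [bd]
  rw [this, this]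
  congr 2
  ext e
  simp only [Finset.mem_filter]
  constructor
  · rintro ⟨h1, h2⟩; exact ⟨(h e h2).1 h1, h2⟩
  · rintro ⟨h1, h2⟩; exact ⟨(h e h2).2 h1, h2⟩

/-- Handshake lemma for a cut: the boundary summed over `D` is the parity of the number of
edges crossing `D`. -/
theorem sum_bd [Fintype V] {G : SimpleGraph V} {J : Finset (Sym2 V)}
    (hJ : ∀ e ∈ J, e ∈ G.edgeSet) (D : Set V) [DecidablePred (· ∈ D)]
    [DecidablePred (Crosses D)] :
    ∑ v with v ∈ D, bd J v = ((J.filter (Crosses D)).card : ZMod 2) := by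
  unfold bd
  rw [Finset.sum_comm, Finset.card_filter]
  push_cast
  refine Finset.sum_congr rfl fun e he => ?_
  have hG := hJ e he
  induction e using Sym2.ind with
  | _ a b =>
    have hab : a ≠ b := G.ne_of_adj hG
    have : ∀ v, (if v ∈ s(a, b) then (1 : ZMod 2) else 0)
        = (if v = a then 1 else 0) + (if v = b then 1 else 0) := by
      intro v
      by_cases h1 : v = a <;> by_cases h2 : v = b <;> simp_all
    simp only [this, Finset.sum_add_distrib, Finset.sum_ite_eq', Finset.mem_filter,
      Finset.mem_univ, true_and]
    by_cases h1 : a ∈ D <;> by_cases h2 : b ∈ D <;> simp [Crosses, h1, h2]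
    decide

theorem pt_of_ne {x v : V} (h : v ≠ x) : pt x v = 0 := if_neg h

theorem sum_pt [Fintype V] (D : Set V) [DecidablePred (· ∈ D)] (x : V) :
    ∑ v with v ∈ D, pt x v = if x ∈ D then 1 else 0 := by
  simp [pt, Finset.sum_ite_eq']

/-- The edge set of a path from `x` to `y` has odd degree exactly at its two ends. -/
theorem bd_path {G : SimpleGraph V} {x y : V} (p : G.Walk x y) (hp : p.edges.Nodup) (v : V) :
    bd p.edges.toFinset v = pt x v + pt y v := by
  induction p with
  | nil => simp [bd, zmod2_add_self]
  | @cons a b c h q ih =>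
    rw [Walk.edges_cons, List.nodup_cons] at hp
    have hn : s(a, b) ∉ q.edges.toFinset := by simpa using hp.1
    have e1 : (Walk.cons h q).edges.toFinset = symmDiff {s(a, b)} q.edges.toFinset := by
      rw [Walk.edges_cons, List.toFinset_cons,
        (Finset.disjoint_singleton_left.2 hn).symmDiff_eq_sup]
      rfl
    rw [e1, bd_symmDiff, ih hp.2, bd_singleton h.ne]
    linear_combination zmod2_add_self (pt b v)

theorem walkWt_eq {G : SimpleGraph V} {F : Finset (Sym2 V)} {x y : V} (p : G.Walk x y)
    (hp : p.edges.Nodup) : walkWt (F : Set (Sym2 V)) p = wt F p.edges.toFinset := by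
  unfold walkWt wt
  rw [List.sum_toFinset _ hp]

theorem edges_sub {G : SimpleGraph V} {x y : V} (p : G.Walk x y) :
    ∀ e ∈ p.edges.toFinset, e ∈ G.edgeSet := fun e he =>
  p.edges_subset_edgeSet (by simpa using he)

/-- An edge set whose odd-degree vertices are `x` and `y` contains a path between them. -/
theorem exists_path [Fintype V] {G : SimpleGraph V} {Z : Finset (Sym2 V)}
    (hZ : ∀ e ∈ Z, e ∈ G.edgeSet) {x y : V} (hb : ∀ v, bd Z v = pt x v + pt y v) :
    ∃ p : G.Walk x y, p.IsPath ∧ ∀ e ∈ p.edges.toFinset, e ∈ Z := by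
  classical
  let H := SimpleGraph.fromEdgeSet (Z : Set (Sym2 V))
  have hHZ : ∀ a b, H.Adj a b → s(a, b) ∈ Z := fun a b h => by
    simpa using ((SimpleGraph.fromEdgeSet_adj _).1 h).1
  let C : Set V := {v | H.Reachable x v}
  have h0 : Z.filter (Crosses C) = ∅ := by
    rw [Finset.filter_eq_empty_iff]
    intro e he hc
    have hG := hZ e he
    induction e using Sym2.ind with
    | _ a b =>
      have hab : a ≠ b := G.ne_of_adj hG
      have hH : H.Adj a b := (SimpleGraph.fromEdgeSet_adj _).2 ⟨by simpa using he, hab⟩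
      have : a ∈ C ↔ b ∈ C :=
        ⟨fun h => h.trans hH.reachable, fun h => h.trans hH.symm.reachable⟩
      simp [Crosses] at hc
      tauto
  have h1 := sum_bd hZ C
  rw [h0] at h1
  simp only [hb, Finset.sum_add_distrib, sum_pt] at h1
  have hx : x ∈ C := SimpleGraph.Reachable.refl x
  have hy : y ∈ C := by
    by_contra hy
    simp [hx, hy] at h1
  obtain ⟨q, hq⟩ := (show H.Reachable x y from hy).exists_isPath
  have hle : H ≤ G := fun a b h => hZ _ (hHZ a b h)
  refine ⟨q.mapLe hle, by simpa using hq, fun e he => ?_⟩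
  have he' : e ∈ q.edges := by simpa using he
  have := q.edges_subset_edgeSet he'
  induction e using Sym2.ind with
  | _ a b => exact hHZ a b this

end Boundary

/-! ### Joins with a movable end, and their level sets -/

section Levels

variable [DecidableEq V]

/-- `J` is an edge set of `G` whose boundary is `τ` plus the point `x`. With `τ` the boundary of
`F` plus the point `r`, these are the edge sets `F ∆ Z` for `Z` with odd degree exactly
at `r` and `x` (for `r = x`, nowhere). -/
def IsJ (G : SimpleGraph V) (τ : V → ZMod 2) (x : V) (J : Finset (Sym2 V)) : Prop :=
  (∀ e ∈ J, e ∈ G.edgeSet) ∧ ∀ v, bd J v = τ v + pt x v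

/-- `J` has the minimum size among the edge sets with boundary `τ` plus the point `x`. -/
def IsOpt (G : SimpleGraph V) (τ : V → ZMod 2) (x : V) (J : Finset (Sym2 V)) : Prop :=
  IsJ G τ x J ∧ ∀ J', IsJ G τ x J' → J.card ≤ J'.card

/-- The level set `k`: the vertices `x` admitting an edge set of size at most `k` whose boundary
is `τ` plus the point `x`. -/
def Sub (G : SimpleGraph V) (τ : V → ZMod 2) (k : ℕ) : Set V :=
  {x | ∃ J, IsJ G τ x J ∧ J.card ≤ k}

variable {G : SimpleGraph V} {τ : V → ZMod 2}

theorem Sub.mono {k l : ℕ} (h : k ≤ l) : Sub G τ k ⊆ Sub G τ l :=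
  fun _ ⟨J, h1, h2⟩ => ⟨J, h1, h2.trans h⟩

theorem IsJ.exists_opt {x : V} {J : Finset (Sym2 V)} (h : IsJ G τ x J) :
    ∃ J', IsOpt G τ x J' ∧ J'.card ≤ J.card := by
  classical
  have hex : ∃ n, ∃ J', IsJ G τ x J' ∧ J'.card = n := ⟨_, J, h, rfl⟩
  obtain ⟨J', h1, h2⟩ := Nat.find_spec hex
  exact ⟨J', ⟨h1, fun J'' h'' => h2 ▸ Nat.find_min' hex ⟨J'', h'', rfl⟩⟩,
    h2 ▸ Nat.find_min' hex ⟨J, h, rfl⟩⟩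

theorem IsOpt.mem_sub {x : V} {J : Finset (Sym2 V)} {k : ℕ} (h : IsOpt G τ x J)
    (hx : x ∈ Sub G τ k) : J.card ≤ k := by
  obtain ⟨J', h1, h2⟩ := hx
  exact (h.2 J' h1).trans h2

theorem IsOpt.of_card {x : V} {J J' : Finset (Sym2 V)} (h : IsOpt G τ x J)
    (h' : IsJ G τ x J') (hc : J'.card ≤ J.card) : IsOpt G τ x J' :=
  ⟨h', fun _ h'' => hc.trans (h.2 _ h'')⟩

theorem IsJ.move {x y : V} {J B : Finset (Sym2 V)} (h : IsJ G τ x J)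
    (hB : ∀ e ∈ B, e ∈ G.edgeSet) (hb : ∀ v, bd B v = pt x v + pt y v) :
    IsJ G τ y (symmDiff J B) := by
  refine ⟨symmDiff_sub h.1 hB, fun v => ?_⟩
  rw [bd_symmDiff, h.2, hb]
  linear_combination zmod2_add_self (pt x v)

theorem IsJ.adj {x y : V} {J : Finset (Sym2 V)} (h : IsJ G τ x J) (hxy : G.Adj x y) :
    IsJ G τ y (symmDiff J {s(x, y)}) :=
  h.move (by simpa using hxy) (bd_singleton hxy.ne)

theorem card_adj_le (J : Finset (Sym2 V)) (e : Sym2 V) :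
    (symmDiff J {e}).card ≤ J.card + 1 := by
  have := card_symmDiff J {e}
  simp only [wt, Finset.sum_singleton, edgeWt] at this
  split_ifs at this <;> omega

theorem card_adj_of_mem {J : Finset (Sym2 V)} {e : Sym2 V} (h : e ∈ J) :
    (symmDiff J {e}).card + 1 = J.card := by
  have := card_symmDiff J {e}
  simp only [wt, Finset.sum_singleton, edgeWt] at this
  simp [h] at this
  omega

theorem card_adj_of_notMem {J : Finset (Sym2 V)} {e : Sym2 V} (h : e ∉ J) :
    (symmDiff J {e}).card = J.card + 1 := by
  have := card_symmDiff J {e}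
  simp only [wt, Finset.sum_singleton, edgeWt] at this
  simp [h] at this
  omega

theorem Sub.adj {x y : V} {k : ℕ} (hx : x ∈ Sub G τ k) (hxy : G.Adj x y) :
    y ∈ Sub G τ (k + 1) := by
  obtain ⟨J, h1, h2⟩ := hx
  exact ⟨_, h1.adj hxy, (card_adj_le _ _).trans (by omega)⟩

/-- In a bipartite graph the sizes of two such edge sets at adjacent vertices have different
parities, every edge crossing a colour class. -/
theorem IsJ.card_ne [Fintype V] (hbip : G.Colorable 2) {x y : V} (hxy : G.Adj x y)
    {J J' : Finset (Sym2 V)} (h : IsJ G τ x J) (h' : IsJ G τ y J') : J.card ≠ J'.card := by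
  classical
  obtain ⟨c⟩ := hbip
  let D : Set V := {v | c v = 0}
  have key : ∀ {z : V} {I : Finset (Sym2 V)}, IsJ G τ z I →
      (I.card : ZMod 2) = ∑ v with v ∈ D, τ v + if z ∈ D then 1 else 0 := by
    intro z I hI
    have h1 := sum_bd hI.1 D
    have h2 : I.filter (Crosses D) = I := by
      rw [Finset.filter_eq_self]
      intro e he
      have hG := hI.1 e he
      induction e using Sym2.ind with
      | _ a b =>
        have hab : c a ≠ c b := c.valid hG
        simp only [Crosses, Sym2.mem_iff, D, Set.mem_ofPred_eq, exists_eq_or_imp,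
          exists_eq_left]
        omega
    rw [h2] at h1
    rw [← h1]
    simp only [hI.2, Finset.sum_add_distrib, sum_pt]
  intro hc
  have h1 := key h
  have h2 := key h'
  rw [hc, h2] at h1
  have hxy' : c x ≠ c y := c.valid hxy
  have h3 := add_left_cancel h1
  have hD : y ∈ D ↔ ¬ x ∈ D := by
    simp only [D, Set.mem_ofPred_eq]
    omega
  by_cases hx : x ∈ D <;> simp [hD, hx] at h3

/-- Moving an optimal edge set along an edge `xy` inside the level set of `x`: an optimal edge set
at `y` arises by a symmetric difference with a path that stays in the level set. The path is the
edge itself unless `y` is below `x` and `xy` is not used; then path and edge form a circuit of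
weight zero, and going around it either way shows that no vertex of it lies above `x`. -/
theorem step [Fintype V] (hbip : G.Colorable 2) {x y : V} (hxy : G.Adj x y)
    {J : Finset (Sym2 V)} (h : IsOpt G τ x J) {k : ℕ} (hx : x ∈ Sub G τ k)
    (hy : y ∈ Sub G τ k) :
    ∃ p : G.Walk x y, (∀ v ∈ p.support, v ∈ Sub G τ k) ∧
      IsOpt G τ y (symmDiff J p.edges.toFinset) := by
  have hJk := h.mem_sub hx
  obtain ⟨J1, hJ1, -⟩ := (h.1.adj hxy).exists_opt
  have hback := h.2 _ (hJ1.1.adj hxy.symm)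
  have hback1 := card_adj_le J1 s(y, x)
  have hne := h.1.card_ne hbip hxy hJ1.1
  have single : (symmDiff J {s(x, y)}).card ≤ J1.card →
      ∃ p : G.Walk x y, (∀ v ∈ p.support, v ∈ Sub G τ k) ∧
      IsOpt G τ y (symmDiff J p.edges.toFinset) := by
    intro hc
    refine ⟨Walk.cons hxy Walk.nil, ?_, ?_⟩
    · simp [hx, hy]
    · simpa using hJ1.of_card (h.1.adj hxy) hc
  by_cases he : s(x, y) ∈ J
  · have := card_adj_of_mem he
    exact single (by omega)
  have hcard := card_adj_of_notMem he
  by_cases hlt : J.card < J1.card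
  · exact single (by omega)
  have hJ1c : J1.card + 1 = J.card := by omega
  obtain ⟨p, hp, hpZ⟩ := exists_path (Z := symmDiff J J1) (symmDiff_sub h.1.1 hJ1.1.1)
    (x := x) (y := y) (fun v => by
      rw [bd_symmDiff, h.1.2, hJ1.1.2]
      linear_combination zmod2_add_self (τ v))
  have hpn := hp.isTrail.edges_nodup
  have hZ : ∀ e ∈ p.edges.toFinset, (e ∈ J ↔ e ∉ J1) := fun e he => by
    have := Finset.mem_symmDiff.1 (hpZ e he)
    tauto
  have hneg := wt_neg hZ
  have hJp := h.1.move (edges_sub p) (bd_path p hpn)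
  have hJ1p := hJ1.1.move (edges_sub p) (fun v => by rw [bd_path p hpn, add_comm])
  have c1 := card_symmDiff J p.edges.toFinset
  have c2 := card_symmDiff J1 p.edges.toFinset
  have c3 := h.2 _ hJ1p
  have c4 := hJ1.2 _ hJp
  refine ⟨p, fun z hz => ?_, hJ1.of_card hJp (by omega)⟩
  have hspec := p.take_spec hz
  have hedges : p.edges = (p.takeUntil z hz).edges ++ (p.dropUntil z hz).edges := by
    rw [← Walk.edges_append, hspec]
  have hnd := hedges ▸ hpn
  obtain ⟨n1, n2, n3⟩ := List.nodup_append.1 hnd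
  have hdisj : Disjoint (p.takeUntil z hz).edges.toFinset (p.dropUntil z hz).edges.toFinset := by
    rw [Finset.disjoint_left]
    intro e h1 h2
    exact n3 e (by simpa using h1) e (by simpa using h2) rfl
  have hw : wt J p.edges.toFinset = wt J (p.takeUntil z hz).edges.toFinset
      + wt J (p.dropUntil z hz).edges.toFinset := by
    rw [← wt_union _ hdisj, hedges, List.toFinset_append]
  have k1 := h.1.move (edges_sub (p.takeUntil z hz)) (bd_path _ n1)
  have k2 := (h.1.adj hxy).move (edges_sub (p.dropUntil z hz))
    (fun v => by rw [bd_path _ n2, add_comm])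
  have d1 := card_symmDiff J (p.takeUntil z hz).edges.toFinset
  have d2 := card_symmDiff J (p.dropUntil z hz).edges.toFinset
  have d3 := card_adj_le (symmDiff J (p.dropUntil z hz).edges.toFinset) s(x, y)
  rw [symmDiff_right_comm] at d3
  by_cases hc : wt J (p.takeUntil z hz).edges.toFinset ≤ 0
  · exact ⟨_, k1, by omega⟩
  · exact ⟨_, k2, by omega⟩

end Levels

/-! ### Components of level sets -/

section Components

theorem comp_absorb {G : SimpleGraph V} {U D C : Set V} (hD : IsComponentOf G U D)
    (hC : (G.induce C).Connected) (hCU : C ⊆ U) {c : V} (hc : c ∈ C) (hcD : c ∈ D) : C ⊆ D := by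
  intro y hy
  obtain ⟨p⟩ := hC.preconnected ⟨c, hc⟩ ⟨y, hy⟩
  have key : ∀ {a b : C} (p : (G.induce C).Walk a b), (a : V) ∈ D → (b : V) ∈ D := by
    intro a b p
    induction p with
    | nil => exact id
    | @cons a b c h q ih => exact fun ha => ih (hD.2.2.2 _ ha _ (hCU b.2) h)
  exact key p hcD

theorem comp_walk {G : SimpleGraph V} {U D : Set V} (hD : IsComponentOf G U D) {x y : V}
    (p : G.Walk x y) (hx : x ∈ D) (hp : ∀ v ∈ p.support, v ∈ U) : ∀ v ∈ p.support, v ∈ D := by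
  induction p with
  | nil => simpa using hx
  | @cons a b c h q ih =>
    simp only [Walk.support_cons, List.mem_cons, forall_eq_or_imp] at hp ⊢
    exact ⟨hx, ih (hD.2.2.2 _ hx _ (hp.2 _ q.start_mem_support) h) hp.2⟩

theorem exists_comp {G : SimpleGraph V} {U : Set V} {a : V} (ha : a ∈ U) :
    ∃ D, IsComponentOf G U D ∧ a ∈ D := by
  classical
  let D : Set V := {y | ∃ p : G.Walk a y, ∀ v ∈ p.support, v ∈ U}
  have haD : a ∈ D := ⟨Walk.nil, by simpa using ha⟩
  refine ⟨D, ⟨⟨a, haD⟩, ?_, ?_, ?_⟩, haD⟩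
  · rintro y ⟨p, hp⟩
    exact hp _ p.end_mem_support
  · have key : ∀ y : D, (G.induce D).Reachable ⟨a, haD⟩ y := by
      rintro ⟨y, p, hp⟩
      refine ⟨p.induce D fun v hv => ⟨p.takeUntil v hv, fun w hw => ?_⟩⟩
      exact hp w (p.support_takeUntil_subset_support hv hw)
    have : Nonempty D := ⟨⟨a, haD⟩⟩
    exact ⟨fun x y => (key x).symm.trans (key y)⟩
  · rintro x ⟨p, hp⟩ y hy hxy
    refine ⟨p.concat hxy, fun v hv => ?_⟩
    rw [Walk.support_concat, List.mem_append, List.mem_singleton] at hv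
    rcases hv with h | h
    · exact hp v h
    · exact h ▸ hy

theorem first_entry {G : SimpleGraph V} {x y : V} (p : G.Walk x y) {K : Set V} (hx : x ∉ K)
    (hz : ∃ z ∈ p.support, z ∈ K) :
    ∃ (a z : V) (q : G.Walk x a) (h : G.Adj a z) (t : G.Walk z y),
      p = q.append (Walk.cons h t) ∧ (∀ v ∈ q.support, v ∉ K) ∧ z ∈ K := by
  induction p with
  | nil =>
    obtain ⟨z, hz, hzK⟩ := hz
    simp only [Walk.support_nil, List.mem_singleton] at hz
    exact absurd (hz ▸ hzK) hx
  | @cons a b c h q ih =>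
    by_cases hb : b ∈ K
    · exact ⟨a, b, Walk.nil, h, q, rfl, by simpa using hx, hb⟩
    · have : ∃ z ∈ q.support, z ∈ K := by
        obtain ⟨z, hz, hzK⟩ := hz
        rw [Walk.support_cons, List.mem_cons] at hz
        rcases hz with h1 | h1
        · exact absurd (h1 ▸ hzK) hx
        · exact ⟨z, h1, hzK⟩
      obtain ⟨a', z, q', h', t, e1, e2, e3⟩ := ih hb this
      refine ⟨a', z, Walk.cons h q', h', t, by rw [e1, Walk.cons_append], ?_, e3⟩
      simp only [Walk.support_cons, List.mem_cons, forall_eq_or_imp]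
      exact ⟨hx, e2⟩

theorem crosses_iff {K : Set V} {a b : V} :
    Crosses K s(a, b) ↔ (a ∈ K ∧ b ∉ K) ∨ (b ∈ K ∧ a ∉ K) := by
  simp only [Crosses, Sym2.mem_iff, exists_eq_or_imp, exists_eq_left]
  tauto

theorem inside_iff {K : Set V} {a b : V} : Inside K s(a, b) ↔ a ∈ K ∧ b ∈ K := by
  simp [Inside]

theorem Crosses.exists_ends {G : SimpleGraph V} {K : Set V} {e : Sym2 V} (h : Crosses K e)
    (he : e ∈ G.edgeSet) : ∃ a b, e = s(a, b) ∧ a ∈ K ∧ b ∉ K ∧ G.Adj a b := by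
  induction e using Sym2.ind with
  | _ a b =>
    rcases crosses_iff.1 h with h | h
    · exact ⟨a, b, rfl, h.1, h.2, he⟩
    · exact ⟨b, a, Sym2.eq_swap, h.1, h.2, SimpleGraph.Adj.symm he⟩

theorem Inside.not_crosses {K : Set V} {e : Sym2 V} (h : Inside K e) : ¬ Crosses K e :=
  fun ⟨_, v, hv, hn⟩ => hn (h v hv)

variable [DecidableEq V]

/-- A path entering `K` splits at its first vertex `z` in `K`; the edge set `A` of the first part
crosses `K` only in its last edge `f`. -/
theorem split_path {G : SimpleGraph V} {x y : V} (p : G.Walk x y) (hp : p.edges.Nodup)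
    {K : Set V} (hx : x ∉ K) (hz : ∃ z ∈ p.support, z ∈ K) :
    ∃ z ∈ K, ∃ (f : Sym2 V) (A B : Finset (Sym2 V)), p.edges.toFinset = A ∪ B ∧ Disjoint A B ∧
      (∀ v, bd A v = pt x v + pt z v) ∧ (∀ v, bd B v = pt z v + pt y v) ∧ f ∈ A ∧ z ∈ f ∧
      Crosses K f ∧ (∀ e ∈ A, ¬ Inside K e) ∧ ∀ e ∈ A, Crosses K e → e = f := by
  obtain ⟨a, z, q, h, t, rfl, h2, h3⟩ := first_entry p hx hz
  have e1 : (q.append (Walk.cons h t)).edges = (q.concat h).edges ++ t.edges := by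
    simp [Walk.edges_concat]
  rw [e1] at hp
  obtain ⟨n1, n2, n3⟩ := List.nodup_append.1 hp
  have ha : a ∉ K := h2 a q.end_mem_support
  have hq : ∀ e ∈ q.edges, ∀ v ∈ e, v ∉ K := fun e he v hv =>
    h2 v (Walk.mem_support_of_mem_edges he hv)
  have hmem : ∀ e ∈ (q.concat h).edges.toFinset, e ∈ q.edges ∨ e = s(a, z) := by
    intro e he
    rw [Walk.edges_concat, List.mem_toFinset, List.concat_eq_append] at he
    simpa using he
  refine ⟨z, h3, s(a, z), (q.concat h).edges.toFinset, t.edges.toFinset, ?_, ?_,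
    bd_path _ n1, bd_path _ n2, ?_, by simp, ?_, ?_, ?_⟩
  · rw [e1, List.toFinset_append]
  · rw [Finset.disjoint_left]
    intro e he he'
    exact n3 e (List.mem_toFinset.1 he) e (List.mem_toFinset.1 he') rfl
  · simp [Walk.edges_concat]
  · exact crosses_iff.2 (Or.inr ⟨h3, ha⟩)
  · intro e he hin
    rcases hmem e he with h' | rfl
    · induction e using Sym2.ind with
      | _ c d => exact hq _ h' c (by simp) (hin c (by simp))
    · exact ha (inside_iff.1 hin).1
  · intro e he hc
    rcases hmem e he with h' | h'
    · obtain ⟨⟨v, hv, hvK⟩, -⟩ := hc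
      exact absurd hvK (hq _ h' v hv)
    · exact h'

variable [Fintype V] {G : SimpleGraph V} {τ : V → ZMod 2}

/-- The end of an optimal edge set can be moved within a component `D` of a level set by changing
only edges inside `D`. -/
theorem transport (hbip : G.Colorable 2) {k : ℕ} {D : Set V}
    (hD : IsComponentOf G (Sub G τ k) D) {x y : V} (hx : x ∈ D) (hy : y ∈ D)
    {J : Finset (Sym2 V)} (hJ : IsOpt G τ x J) :
    ∃ J', IsOpt G τ y J' ∧ ∀ e, ¬ Inside D e → (e ∈ J' ↔ e ∈ J) := by
  obtain ⟨p⟩ := hD.2.2.1.preconnected ⟨x, hx⟩ ⟨y, hy⟩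
  have key : ∀ {a b : D} (p : (G.induce D).Walk a b) (J : Finset (Sym2 V)),
      IsOpt G τ (a : V) J →
      ∃ J', IsOpt G τ (b : V) J' ∧ ∀ e, ¬ Inside D e → (e ∈ J' ↔ e ∈ J) := by
    intro a b p
    induction p with
    | nil => exact fun J hJ => ⟨J, hJ, fun _ _ => Iff.rfl⟩
    | @cons a b c h q ih =>
      intro J hJ
      obtain ⟨w, hw, hopt⟩ := step hbip (show G.Adj a b from h) hJ (hD.2.1 a.2) (hD.2.1 b.2)
      have hwD := comp_walk hD w a.2 hw
      obtain ⟨J', h1, h2⟩ := ih _ hopt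
      refine ⟨J', h1, fun e he => (h2 e he).trans ?_⟩
      have : e ∉ w.edges.toFinset := fun hew =>
        he fun v hv => hwD v (Walk.mem_support_of_mem_edges (by simpa using hew) hv)
      simp [Finset.mem_symmDiff, this]
  exact key p J hJ

/-- An optimal edge set with its movable end in `D` does not cross `D`: after moving the end to
the inner end of a crossing edge, deleting that edge would put its outer end into the level
set. -/
theorem no_cross (hbip : G.Colorable 2) {k : ℕ} {D : Set V}
    (hD : IsComponentOf G (Sub G τ k) D) {x : V} (hx : x ∈ D)
    {J : Finset (Sym2 V)} (hJ : IsOpt G τ x J) {e : Sym2 V} (he : e ∈ J) : ¬ Crosses D e := by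
  intro hc
  obtain ⟨u, v, rfl, hu, hv, huv⟩ := hc.exists_ends (hJ.1.1 e he)
  obtain ⟨J', h1, h2⟩ := transport hbip hD hx hu hJ
  have he' : s(u, v) ∈ J' := (h2 _ fun h => h.not_crosses hc).2 he
  have := card_adj_of_mem he'
  have := h1.mem_sub (hD.2.1 hu)
  exact hv (hD.2.2.2 u hu v ⟨_, h1.1.adj huv, by omega⟩ huv)

/-- Sebő's theorem on distance components: an optimal edge set crosses a component of a level set
at most once. -/
theorem cross_unique (hbip : G.Colorable 2) {k : ℕ} {D : Set V}
    (hD : IsComponentOf G (Sub G τ k) D) {r : V} {F : Finset (Sym2 V)} (hF : IsOpt G τ r F)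
    {e g : Sym2 V} (he : e ∈ F) (hg : g ∈ F) (hec : Crosses D e) (hgc : Crosses D g) :
    g = e := by
  by_contra hge
  have hr : r ∉ D := fun hr => no_cross hbip hD hr hF he hec
  obtain ⟨u, v, rfl, hu, hv, huv⟩ := hec.exists_ends (hF.1.1 e he)
  obtain ⟨Iu, hIu, hIuk⟩ := hD.2.1 hu
  obtain ⟨Ju, hJu, hJuc⟩ := hIu.exists_opt
  have heJu : s(u, v) ∉ Ju := fun h => no_cross hbip hD hu hJu h hec
  have hvk : ∀ J', IsJ G τ v J' → k < J'.card := by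
    intro J' hJ'
    by_contra hlt
    exact hv (hD.2.2.2 u hu v ⟨J', hJ', by omega⟩ huv)
  have hJv := hJu.1.adj huv
  have hJvc := card_adj_of_notMem heJu
  set Jv := symmDiff Ju {s(u, v)} with hJvdef
  have hJvmem : ∀ e', e' ≠ s(u, v) → (e' ∈ Jv ↔ e' ∈ Ju) := by
    intro e' h; simp [hJvdef, Finset.mem_symmDiff, h]
  have heJv : s(u, v) ∈ Jv := by simp [hJvdef, Finset.mem_symmDiff, heJu]
  obtain ⟨p, hp, hpZ⟩ := exists_path (Z := symmDiff F Jv) (symmDiff_sub hF.1.1 hJv.1)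
    (x := r) (y := v) (fun w => by
      rw [bd_symmDiff, hF.1.2, hJv.2]
      linear_combination zmod2_add_self (τ w))
  have hpn := hp.isTrail.edges_nodup
  have hZ : ∀ e' ∈ p.edges.toFinset, (e' ∈ F ↔ e' ∉ Jv) := fun e' he' => by
    have := Finset.mem_symmDiff.1 (hpZ e' he')
    tauto
  have hep : s(u, v) ∉ p.edges.toFinset := fun h => (hZ _ h).1 he heJv
  by_cases hmeet : ∃ z ∈ p.support, z ∈ D
  · obtain ⟨z, hzD, f, A, B, hAB, -, hbA, -, -, -, -, hAin, -⟩ := split_path p hpn hr hmeet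
    have hA : ∀ e' ∈ A, e' ∈ p.edges.toFinset := fun e' h => hAB ▸ Finset.mem_union_left _ h
    have hAG : ∀ e' ∈ A, e' ∈ G.edgeSet := fun e' h => edges_sub p e' (hA e' h)
    have hFA := hF.1.move hAG hbA
    have heFA : s(u, v) ∈ symmDiff F A :=
      Finset.mem_symmDiff.2 (Or.inl ⟨he, fun h => hep (hA _ h)⟩)
    obtain ⟨Jz, hJz, hJzout⟩ := transport hbip hD hu hzD hJu
    have hlt : Jz.card < (symmDiff F A).card := by
      by_contra hle
      exact no_cross hbip hD hzD (hJz.of_card hFA (by omega)) heFA hec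
    have hback := hJz.1.move hAG (fun w => by rw [hbA, add_comm])
    have hneg : wt F A = - wt Jz A := wt_neg fun e' h => by
      rw [hZ e' (hA e' h), hJvmem e' (fun h' => hep (h' ▸ hA e' h)), hJzout e' (hAin e' h)]
    have c1 := card_symmDiff F A
    have c2 := card_symmDiff Jz A
    have c3 := hF.2 _ hback
    omega
  · push Not at hmeet
    have hneg := wt_neg hZ
    have hFp := hF.1.move (edges_sub p) (bd_path p hpn)
    have hJvp := hJv.move (edges_sub p) (fun w => by rw [bd_path p hpn, add_comm])
    have c1 := card_symmDiff F p.edges.toFinset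
    have c2 := card_symmDiff Jv p.edges.toFinset
    have c3 := hF.2 _ hJvp
    have heFp : s(u, v) ∈ symmDiff F p.edges.toFinset :=
      Finset.mem_symmDiff.2 (Or.inl ⟨he, hep⟩)
    have c4 := card_adj_of_mem heFp
    have hu' := hFp.adj huv.symm
    rw [Sym2.eq_swap] at hu'
    refine no_cross hbip hD hu (hJu.of_card hu' (by omega)) (e := g) ?_ hgc
    have hgp : g ∉ p.edges.toFinset := by
      intro h
      obtain ⟨⟨w, hw, hwD⟩, -⟩ := hgc
      exact hmeet w (Walk.mem_support_of_mem_edges (by simpa using h) hw) hwD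
    simp [Finset.mem_symmDiff, hg, hge] at hgp ⊢
    exact hgp

end Components

/-! ### Counting edges by cuts -/

section Counting

variable [DecidableEq V] {G : SimpleGraph V} {τ : V → ZMod 2}

theorem comp_nested {k l : ℕ} (hkl : k ≤ l) {D D' : Set V}
    (hD : IsComponentOf G (Sub G τ k) D) (hD' : IsComponentOf G (Sub G τ l) D') {a : V}
    (ha : a ∈ D) (ha' : a ∈ D') : D ⊆ D' :=
  comp_absorb hD' hD.2.2.1 (hD.2.1.trans (Sub.mono hkl)) ha ha'

/-- An edge leaving a component of level `k` starts at a vertex of level exactly `k`. -/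
theorem cut_level {k : ℕ} {K : Set V} (hK : IsComponentOf G (Sub G τ k) K) {a b : V}
    (ha : a ∈ K) (hb : b ∉ K) (hab : G.Adj a b) {j : ℕ} (hj : j < k) : a ∉ Sub G τ j :=
  fun h => hb (hK.2.2.2 a ha b (Sub.mono (by omega) (Sub.adj h hab)) hab)

/-- An edge crosses at most one component of a level set. -/
theorem comp_unique {k l : ℕ} {D D' : Set V}
    (hD : IsComponentOf G (Sub G τ k) D) (hD' : IsComponentOf G (Sub G τ l) D')
    {e : Sym2 V} (he : e ∈ G.edgeSet) (h : Crosses D e) (h' : Crosses D' e) : D = D' := by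
  wlog hkl : k ≤ l generalizing k l D D'
  · exact (this hD' hD h' h (by omega)).symm
  obtain ⟨a, b, rfl, ha, hb, hab⟩ := h.exists_ends he
  rcases crosses_iff.1 h' with ⟨h1, h2⟩ | ⟨h1, h2⟩
  · have hbl : b ∉ Sub G τ l := fun hb' => h2 (hD'.2.2.2 a h1 b hb' hab)
    have hbk := Sub.adj (hD.2.1 ha) hab
    have : k = l := by
      by_contra hne
      exact hbl (Sub.mono (by omega) hbk)
    subst this
    exact (comp_nested le_rfl hD hD' ha h1).antisymm (comp_nested le_rfl hD' hD h1 ha)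
  · exact absurd (hD'.2.2.2 b h1 a (Sub.mono hkl (hD.2.1 ha)) hab.symm) h2

variable [Fintype V]

theorem adj_levels (hbip : G.Colorable 2) {a b : V} (hab : G.Adj a b) {J : Finset (Sym2 V)}
    (hJ : IsJ G τ a J) :
    (∃ k, a ∈ Sub G τ k ∧ b ∉ Sub G τ k ∧ b ∈ Sub G τ (k + 1)) ∨
      ∃ k, b ∈ Sub G τ k ∧ a ∉ Sub G τ k ∧ a ∈ Sub G τ (k + 1) := by
  obtain ⟨Ja, ha, -⟩ := hJ.exists_opt
  obtain ⟨Jb, hb, -⟩ := (hJ.adj hab).exists_opt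
  have hne := ha.1.card_ne hbip hab hb.1
  have ha' : a ∈ Sub G τ Ja.card := ⟨Ja, ha.1, le_rfl⟩
  have hb' : b ∈ Sub G τ Jb.card := ⟨Jb, hb.1, le_rfl⟩
  rcases lt_or_gt_of_ne hne with h | h
  · exact Or.inl ⟨Ja.card, ha', fun h' => absurd (hb.mem_sub h') (by omega), Sub.adj ha' hab⟩
  · exact Or.inr ⟨Jb.card, hb', fun h' => absurd (ha.mem_sub h') (by omega),
      Sub.adj hb' hab.symm⟩

open Classical in
/-- An optimal edge set `J` crosses each component at most once, hence as rarely as parity allows.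
So among edge sets whose boundary has the same parity on every member of a family of components,
it uses the fewest edges crossing members of the family. -/
theorem count (hbip : G.Colorable 2) {r : V} {J S : Finset (Sym2 V)} (hJ : IsOpt G τ r J)
    (hS : ∀ e ∈ S, e ∈ G.edgeSet) (P : Set V → Prop)
    (hP : ∀ D, P D → ∃ k, IsComponentOf G (Sub G τ k) D)
    (hpar : ∀ D, P D → ∑ v with v ∈ D, bd S v = ∑ v with v ∈ D, bd J v) :
    (J.filter fun e => ∃ D, P D ∧ Crosses D e).card ≤
      (S.filter fun e => ∃ D, P D ∧ Crosses D e).card := by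
  let 𝒟 : Finset (Set V) := Finset.univ.filter P
  have hU : ∀ I : Finset (Sym2 V), (I.filter fun e => ∃ D, P D ∧ Crosses D e)
      = 𝒟.biUnion fun D => I.filter (Crosses D) := by
    intro I
    ext e
    simp only [Finset.mem_filter, Finset.mem_biUnion, 𝒟, Finset.mem_univ, true_and]
    tauto
  have hdisj : (𝒟 : Set (Set V)).PairwiseDisjoint fun D => S.filter (Crosses D) := by
    intro D hD D' hD' hne
    rw [Function.onFun, Finset.disjoint_left]
    intro e he he'
    obtain ⟨k, hk⟩ := hP D (by simpa [𝒟] using hD)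
    obtain ⟨l, hl⟩ := hP D' (by simpa [𝒟] using hD')
    rw [Finset.mem_filter] at he he'
    exact hne (comp_unique hk hl (hS e he.1) he.2 he'.2)
  rw [hU, hU, Finset.card_biUnion hdisj]
  refine Finset.card_biUnion_le.trans (Finset.sum_le_sum fun D hD => ?_)
  have hPD : P D := by simpa [𝒟] using hD
  obtain ⟨k, hk⟩ := hP D hPD
  have h1 : (J.filter (Crosses D)).card ≤ 1 := by
    rw [Finset.card_le_one]
    intro a ha b hb
    rw [Finset.mem_filter] at ha hb
    exact (cross_unique hbip hk hJ ha.1 hb.1 ha.2 hb.2).symm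
  have h2 := hpar D hPD
  rw [sum_bd hS, sum_bd hJ.1.1] at h2
  by_contra hlt
  have h3 : (J.filter (Crosses D)).card = 1 := by omega
  have h4 : (S.filter (Crosses D)).card = 0 := by omega
  rw [h3, h4] at h2
  simp at h2

open Classical in
/-- The edges inside a component `K` of level `k` are those crossing a lower component contained
in `K`. Hence an optimal edge set has the fewest edges inside `K` among the edge sets with the
same boundary at the vertices of `K` below level `k`. -/
theorem count_inside (hbip : G.Colorable 2) {k : ℕ} {K : Set V}
    (hK : IsComponentOf G (Sub G τ k) K) {r : V} {J S : Finset (Sym2 V)} (hJ : IsOpt G τ r J)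
    (hS : ∀ e ∈ S, e ∈ G.edgeSet)
    (hb : ∀ v ∈ K, ∀ j < k, v ∈ Sub G τ j → bd S v = bd J v) :
    (J.filter (Inside K)).card ≤ (S.filter (Inside K)).card := by
  let P : Set V → Prop := fun D => ∃ j < k, IsComponentOf G (Sub G τ j) D ∧ D ⊆ K
  have hX : ∀ e ∈ G.edgeSet, Inside K e ↔ ∃ D, P D ∧ Crosses D e := by
    intro e he
    constructor
    · intro hin
      have key : ∀ a b j, a ∈ K → b ∈ K → a ∈ Sub G τ j → b ∉ Sub G τ j →
          ∃ D, P D ∧ Crosses D s(a, b) := by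
        intro a b j ha hb haj hbj
        have hjk : j < k := by
          by_contra hle
          exact hbj (Sub.mono (by omega) (hK.2.1 hb))
        obtain ⟨D, hD, haD⟩ := exists_comp haj
        exact ⟨D, ⟨j, hjk, hD, comp_nested hjk.le hD hK haD ha⟩,
          crosses_iff.2 (Or.inl ⟨haD, fun h => hbj (hD.2.1 h)⟩)⟩
      induction e using Sym2.ind with
      | _ a b =>
        obtain ⟨ha, hb⟩ := inside_iff.1 hin
        obtain ⟨I, hI, -⟩ := hK.2.1 ha
        rcases adj_levels hbip he hI with ⟨j, h1, h2, -⟩ | ⟨j, h1, h2, -⟩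
        · exact key a b j ha hb h1 h2
        · rw [Sym2.eq_swap]
          exact key b a j hb ha h1 h2
    · rintro ⟨D, ⟨j, hj, hD, hDK⟩, hc⟩
      obtain ⟨a, b, rfl, ha, hb, hab⟩ := hc.exists_ends he
      exact inside_iff.2 ⟨hDK ha, hK.2.2.2 a (hDK ha) b
        (Sub.mono (by omega) (Sub.adj (hD.2.1 ha) hab)) hab⟩
  have h := count hbip hJ hS P (fun D ⟨j, _, hD, _⟩ => ⟨j, hD⟩) (by
    rintro D ⟨j, hj, hD, hDK⟩
    refine Finset.sum_congr rfl fun v hv => ?_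
    have hv' : v ∈ D := by simpa using hv
    exact hb v (hDK hv') j hj (hD.2.1 hv'))
  have hI : ∀ I : Finset (Sym2 V), (∀ e ∈ I, e ∈ G.edgeSet) →
      I.filter (Inside K) = I.filter (fun e => ∃ D, P D ∧ Crosses D e) := by
    intro I hI
    ext e
    simp only [Finset.mem_filter]
    exact and_congr_right fun he => hX e (hI e he)
  rw [hI J hJ.1.1, hI S hS]
  convert h

open Classical in
/-- Edges not inside `K` cross a component that contains `K` or is disjoint from it. So
the symmetric difference of an optimal edge set with a set `R` of such edges does not decrease
its size when the odd-degree vertices of `R` all lie in `K`. -/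
theorem count_outside (hbip : G.Colorable 2) {k : ℕ} {K : Set V}
    (hK : IsComponentOf G (Sub G τ k) K) {r : V} {J R : Finset (Sym2 V)} (hJ : IsOpt G τ r J)
    (hR : ∀ e ∈ R, e ∈ G.edgeSet) (hRK : ∀ e ∈ R, ¬ Inside K e)
    (hfeas : ∀ e ∈ R, ∀ v ∈ e, ∃ I, IsJ G τ v I) (hb : ∀ v ∉ K, bd R v = 0) :
    0 ≤ wt J R := by
  let P : Set V → Prop := fun D =>
    ∃ j, IsComponentOf G (Sub G τ j) D ∧ (K ⊆ D ∨ Disjoint K D)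
  have hX : ∀ e ∈ R, ∃ D, P D ∧ Crosses D e := by
    intro e he
    have key : ∀ a b j, G.Adj a b → ¬ (a ∈ K ∧ b ∈ K) → a ∈ Sub G τ j → b ∉ Sub G τ j →
        b ∈ Sub G τ (j + 1) → ∃ D, P D ∧ Crosses D s(a, b) := by
      intro a b j hab hn haj hbj hbj1
      obtain ⟨D, hD, haD⟩ := exists_comp haj
      refine ⟨D, ⟨j, hD, ?_⟩, crosses_iff.2 (Or.inl ⟨haD, fun h => hbj (hD.2.1 h)⟩)⟩
      by_cases hd : Disjoint K D
      · exact Or.inr hd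
      obtain ⟨c, hcK, hcD⟩ := Set.not_disjoint_iff.1 hd
      rcases le_or_gt k j with hkj | hjk
      · exact Or.inl (comp_nested hkj hK hD hcK hcD)
      · have haK := comp_nested hjk.le hD hK hcD hcK haD
        exact absurd ⟨haK, hK.2.2.2 a haK b (Sub.mono (by omega) hbj1) hab⟩ hn
    have hG := hR e he
    have hin := hRK e he
    have hf := hfeas e he
    induction e using Sym2.ind with
    | _ a b =>
      rw [inside_iff] at hin
      obtain ⟨I, hI⟩ := hf a (by simp)
      rcases adj_levels hbip hG hI with ⟨j, h1, h2, h3⟩ | ⟨j, h1, h2, h3⟩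
      · exact key a b j hG hin h1 h2 h3
      · rw [Sym2.eq_swap]
        exact key b a j (SimpleGraph.Adj.symm hG) (fun h => hin h.symm) h1 h2 h3
  have hpar : ∀ D, P D → ∑ v with v ∈ D, bd R v = 0 := by
    rintro D ⟨j, -, hD⟩
    rcases hD with hD | hD
    · have h1 := sum_bd hR Set.univ
      have h2 : R.filter (Crosses Set.univ) = ∅ := by
        rw [Finset.filter_eq_empty_iff]
        rintro e - ⟨-, v, -, hv⟩
        exact hv trivial
      rw [h2] at h1
      simp only [Set.mem_univ, Finset.filter_true, Finset.card_empty, Nat.cast_zero] at h1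
      rw [← h1]
      refine Finset.sum_subset (Finset.subset_univ _) fun v _ hv => hb v fun hvK => hv ?_
      simpa using hD hvK
    · refine Finset.sum_eq_zero fun v hv => hb v fun hvK => ?_
      exact Set.disjoint_left.1 hD hvK (by simpa using hv)
  have h := count hbip hJ (symmDiff_sub hJ.1.1 hR) P (fun D ⟨j, hD, _⟩ => ⟨j, hD⟩) (by
    intro D hD
    simp only [bd_symmDiff, Finset.sum_add_distrib, hpar D hD, add_zero])
  have hrest : (symmDiff J R).filter (fun e => ¬ ∃ D, P D ∧ Crosses D e)
      = J.filter (fun e => ¬ ∃ D, P D ∧ Crosses D e) := by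
    ext e
    simp only [Finset.mem_filter, Finset.mem_symmDiff]
    constructor
    · rintro ⟨h1 | h1, h2⟩
      · exact ⟨h1.1, h2⟩
      · exact absurd (hX e h1.1) h2
    · rintro ⟨h1, h2⟩
      exact ⟨Or.inl ⟨h1, fun h3 => h2 (hX e h3)⟩, h2⟩
  have c1 := Finset.card_filter_add_card_filter_not (s := J) (fun e => ∃ D, P D ∧ Crosses D e)
  have c2 := Finset.card_filter_add_card_filter_not (s := symmDiff J R)
    (fun e => ∃ D, P D ∧ Crosses D e)
  have c3 := card_symmDiff J R
  rw [hrest] at c2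
  omega

end Counting

/-! ### Minimum joins and distances -/

section Distance

variable {G : SimpleGraph V}

/-- The distance is zero by convention when there is no path. -/
theorem distF_of_not_reachable (F : Set (Sym2 V)) {a b : V} (h : ¬ G.Reachable a b) :
    distF G F a b = 0 := by
  have : {n : ℤ | ∃ p : G.Walk a b, p.IsPath ∧ walkWt F p = n} = ∅ := by
    rw [Set.eq_empty_iff_forall_notMem]
    rintro n ⟨p, -⟩
    exact h ⟨p⟩
  rw [distF, this, Int.csInf_empty]

variable [DecidableEq V]

/-- `F` has the minimum size among the edge sets of `G` with the same boundary: `F` is a minimum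
join for its own set of odd-degree vertices. -/
def IsMinSet (G : SimpleGraph V) (F : Finset (Sym2 V)) : Prop :=
  (∀ e ∈ F, e ∈ G.edgeSet) ∧
    ∀ J : Finset (Sym2 V), (∀ e ∈ J, e ∈ G.edgeSet) → (∀ v, bd J v = bd F v) → F.card ≤ J.card

theorem odd_iff_bd (J : Finset (Sym2 V)) (v : V) :
    Odd ({e ∈ (J : Set (Sym2 V)) | v ∈ e}).ncard ↔ bd J v = 1 := by
  have h1 : {e ∈ (J : Set (Sym2 V)) | v ∈ e} = ((J.filter fun e => v ∈ e : Finset _) : Set _) := by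
    ext e; simp
  have h2 : bd J v = ((J.filter fun e => v ∈ e).card : ZMod 2) := by simp [bd]
  rw [h1, Set.ncard_coe_finset, h2, ZMod.natCast_eq_one_iff_odd]

theorem IsMinJoin.isMinSet {T : Set V} {F : Finset (Sym2 V)}
    (h : IsMinJoin G T (F : Set (Sym2 V))) : IsMinSet G F := by
  obtain ⟨⟨h1, h2⟩, h3⟩ := h
  refine ⟨fun e he => h1 (by simpa using he), fun J hJ hb => ?_⟩
  rw [Set.ncard_coe_finset] at h3
  rw [h3]
  refine Nat.sInf_le ⟨(J : Set (Sym2 V)), ⟨fun e he => hJ e (by simpa using he), fun v => ?_⟩,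
    Set.ncard_coe_finset J⟩
  rw [← h2, odd_iff_bd, odd_iff_bd, hb]

theorem IsMinSet.isOpt {F : Finset (Sym2 V)} (hF : IsMinSet G F) (r : V) :
    IsOpt G (bd F + pt r) r F := by
  have h : ∀ v, bd F v = (bd F + pt r) v + pt r v := fun v => by
    rw [Pi.add_apply]
    linear_combination -zmod2_add_self (pt r v)
  exact ⟨⟨hF.1, h⟩, fun J hJ => hF.2 J hJ.1 fun v => (hJ.2 v).trans (h v).symm⟩

theorem distF_le_walk (F : Finset (Sym2 V)) {a b : V} (p : G.Walk a b) (hp : p.IsPath) :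
    distF G (F : Set (Sym2 V)) a b ≤ wt F p.edges.toFinset := by
  refine csInf_le ⟨-(F.card : ℤ), ?_⟩ ⟨p, hp, walkWt_eq p hp.isTrail.edges_nodup⟩
  rintro n ⟨q, hq, rfl⟩
  rw [walkWt_eq q hq.isTrail.edges_nodup]
  have := card_symmDiff F q.edges.toFinset
  omega

theorem distF_attained (F : Finset (Sym2 V)) {a b : V} (h : G.Reachable a b) :
    ∃ p : G.Walk a b, p.IsPath ∧
      wt F p.edges.toFinset = distF G (F : Set (Sym2 V)) a b := by
  obtain ⟨p, hp⟩ := h.exists_isPath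
  have hmem := Int.csInf_mem
    (s := {n : ℤ | ∃ p : G.Walk a b, p.IsPath ∧ walkWt (F : Set (Sym2 V)) p = n})
    ⟨_, p, hp, rfl⟩ (by
      refine ⟨-(F.card : ℤ), ?_⟩
      rintro n ⟨q, hq, rfl⟩
      rw [walkWt_eq q hq.isTrail.edges_nodup]
      have := card_symmDiff F q.edges.toFinset
      omega)
  obtain ⟨q, hq, h1⟩ := hmem
  exact ⟨q, hq, by rw [← walkWt_eq q hq.isTrail.edges_nodup, h1]; rfl⟩

theorem IsMinSet.exists_isJ {F : Finset (Sym2 V)} (hF : IsMinSet G F) {a b : V}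
    (h : G.Reachable a b) :
    ∃ J, IsJ G (bd F + pt a) b J ∧ (J.card : ℤ) = F.card + distF G (F : Set (Sym2 V)) a b := by
  obtain ⟨p, hp, h1⟩ := distF_attained F h
  refine ⟨_, (hF.isOpt a).1.move (edges_sub p) (bd_path p hp.isTrail.edges_nodup), ?_⟩
  rw [card_symmDiff, h1]

theorem IsJ.feasible {τ : V → ZMod 2} {a b : V} (p : G.Walk a b) {J : Finset (Sym2 V)}
    (hJ : IsJ G τ b J) : ∀ v ∈ p.support, ∃ I, IsJ G τ v I := by
  induction p with
  | nil => simpa using ⟨J, hJ⟩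
  | @cons a b c h q ih =>
    simp only [Walk.support_cons, List.mem_cons, forall_eq_or_imp]
    refine ⟨?_, ih hJ⟩
    obtain ⟨I, hI⟩ := ih hJ b q.start_mem_support
    exact ⟨_, hI.adj h.symm⟩

variable [Fintype V]

theorem IsMinSet.dist_le {F : Finset (Sym2 V)} (hF : IsMinSet G F) {a b : V}
    {J : Finset (Sym2 V)} (hJ : IsJ G (bd F + pt a) b J) :
    G.Reachable a b ∧ F.card + distF G (F : Set (Sym2 V)) a b ≤ J.card := by
  obtain ⟨p, hp, hpZ⟩ := exists_path (Z := symmDiff F J) (symmDiff_sub hF.1 hJ.1)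
    (x := a) (y := b) (fun v => by
      rw [bd_symmDiff, hJ.2, Pi.add_apply]
      linear_combination zmod2_add_self (bd F v))
  have hpn := hp.isTrail.edges_nodup
  have hneg : wt F p.edges.toFinset = - wt J p.edges.toFinset := wt_neg fun e he => by
    have := Finset.mem_symmDiff.1 (hpZ e he)
    tauto
  have h1 := hJ.move (edges_sub p) (fun v => by rw [bd_path p hpn, add_comm])
  have h2 := (hF.isOpt a).2 _ h1
  have h3 := card_symmDiff J p.edges.toFinset
  have h4 := distF_le_walk F p hp
  exact ⟨⟨p⟩, by omega⟩

theorem IsMinSet.card_opt {F : Finset (Sym2 V)} (hF : IsMinSet G F) {a b : V}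
    {J : Finset (Sym2 V)} (hJ : IsOpt G (bd F + pt a) b J) :
    (J.card : ℤ) = F.card + distF G (F : Set (Sym2 V)) a b := by
  obtain ⟨h1, h2⟩ := hF.dist_le hJ.1
  obtain ⟨I, h3, h4⟩ := hF.exists_isJ h1
  have := hJ.2 _ h3
  omega

theorem IsMinSet.mem_sub {F : Finset (Sym2 V)} (hF : IsMinSet G F) {a b : V} {k : ℕ} :
    b ∈ Sub G (bd F + pt a) k ↔
      G.Reachable a b ∧ F.card + distF G (F : Set (Sym2 V)) a b ≤ k := by
  constructor
  · rintro ⟨J, h1, h2⟩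
    obtain ⟨h3, h4⟩ := hF.dist_le h1
    exact ⟨h3, by omega⟩
  · rintro ⟨h1, h2⟩
    obtain ⟨J, h3, h4⟩ := hF.exists_isJ h1
    exact ⟨J, h3, by omega⟩

end Distance

/-! ### Exchanging the part inside a component -/

section Exchange

theorem crosses_of_mem {K : Set V} {e : Sym2 V} {v : V} (hv : v ∈ K) (he : v ∈ e)
    (hn : ¬ Inside K e) : Crosses K e := by
  refine ⟨⟨v, he, hv⟩, ?_⟩
  by_contra h
  push Not at h
  exact hn h

open Classical in
theorem card_inside_of_agree {K : Set V} {J J' : Finset (Sym2 V)}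
    (h : ∀ e, ¬ Inside K e → (e ∈ J ↔ e ∈ J')) :
    ((J.filter (Inside K)).card : ℤ) - (J'.filter (Inside K)).card = J.card - J'.card := by
  have h1 : J.filter (fun e => ¬ Inside K e) = J'.filter (fun e => ¬ Inside K e) := by
    ext e
    simp only [Finset.mem_filter]
    exact and_congr_left fun hn => h e hn
  have c1 := Finset.card_filter_add_card_filter_not (s := J) (Inside K)
  have c2 := Finset.card_filter_add_card_filter_not (s := J') (Inside K)
  rw [h1] at c1
  omega

variable [DecidableEq V] {G : SimpleGraph V} {τ : V → ZMod 2}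

open Classical in
theorem bd_inside_of_notMem (J : Finset (Sym2 V)) {K : Set V} {v : V} (hv : v ∉ K) :
    bd (J.filter (Inside K)) v = 0 :=
  Finset.sum_eq_zero fun _ he => if_neg fun h => hv ((Finset.mem_filter.1 he).2 v h)

open Classical in
theorem bd_inside_of_mem {J : Finset (Sym2 V)} {K : Set V} {v : V} (hv : v ∈ K)
    (hJ : ∀ e ∈ J, v ∈ e → ¬ Crosses K e) : bd (J.filter (Inside K)) v = bd J v := by
  refine bd_congr fun e he => ?_
  rw [Finset.mem_filter]
  refine ⟨And.left, fun h => ⟨h, ?_⟩⟩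
  by_contra hn
  exact hJ e h he (crosses_of_mem hv he hn)

open Classical in
theorem bd_inside_of_mem_of_cross {F : Finset (Sym2 V)} {K : Set V} {u s v : V}
    (hu : u ∈ K) (hs : s ∉ K) (he : s(u, s) ∈ F)
    (hF : ∀ e ∈ F, Crosses K e → e = s(u, s)) (hv : v ∈ K) :
    bd (F.filter (Inside K)) v = bd F v + pt u v := by
  have hus : u ≠ s := fun h => hs (h ▸ hu)
  have h1 : bd (F.filter fun e => ¬ Inside K e) v = bd {s(u, s)} v := by
    refine bd_congr fun e hve => ?_
    rw [Finset.mem_filter, Finset.mem_singleton]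
    constructor
    · rintro ⟨h1, h2⟩
      exact hF e h1 (crosses_of_mem hv hve h2)
    · rintro rfl
      exact ⟨he, fun h => hs (inside_iff.1 h).2⟩
  have h2 : pt s v = 0 := pt_of_ne fun h => hs (h ▸ hv)
  rw [bd_filter F (Inside K) v, h1, bd_singleton hus, h2]
  linear_combination -zmod2_add_self (pt u v)

open Classical in
/-- Let `u s` be the only edge of `F` crossing `K`, let `J` be an edge set with boundary that of
`F` plus `r` and `y`, not crossing `K`, and let `A` have no edges inside `K` and odd degree
at `a` and `z`. Replacing the part of `F ∆ A` inside `K` by that of `J` adds the points `u` and `y`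
to the boundary. -/
theorem exchange {F A J : Finset (Sym2 V)} {K : Set V} {r u s y a z : V}
    (hFG : ∀ e ∈ F, e ∈ G.edgeSet) (hu : u ∈ K) (hs : s ∉ K) (he : s(u, s) ∈ F)
    (hF : ∀ e ∈ F, Crosses K e → e = s(u, s)) (hr : r ∉ K) (hy : y ∈ K)
    (hJ : IsJ G (bd F + pt r) y J) (hJK : ∀ e ∈ J, ¬ Crosses K e)
    (hA : ∀ e ∈ A, e ∈ G.edgeSet) (hAK : ∀ e ∈ A, ¬ Inside K e)
    (hbA : ∀ v, bd A v = pt a v + pt z v) :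
    ∃ M : Finset (Sym2 V), (∀ e ∈ M, e ∈ G.edgeSet) ∧
      (∀ v, bd M v = bd F v + pt a v + pt z v + pt u v + pt y v) ∧
      (M.card : ℤ) = F.card + wt F A + (J.filter (Inside K)).card
        - (F.filter (Inside K)).card ∧
      ∀ e, ¬ Inside K e → (e ∈ M ↔ e ∈ symmDiff F A) := by
  have hFA := symmDiff_sub hFG hA
  have hin : (symmDiff F A).filter (Inside K) = F.filter (Inside K) := by
    ext e
    simp only [Finset.mem_filter]
    refine and_congr_left fun h => ?_
    have : e ∉ A := fun h' => hAK e h' h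
    simp [Finset.mem_symmDiff, this]
  have hdisj : Disjoint ((symmDiff F A).filter fun e => ¬ Inside K e) (J.filter (Inside K)) := by
    rw [Finset.disjoint_left]
    intro e h1 h2
    exact (Finset.mem_filter.1 h1).2 (Finset.mem_filter.1 h2).2
  refine ⟨(symmDiff F A).filter (fun e => ¬ Inside K e) ∪ J.filter (Inside K), ?_, ?_, ?_, ?_⟩
  · intro e h
    rcases Finset.mem_union.1 h with h | h
    · exact hFA e (Finset.mem_filter.1 h).1
    · exact hJ.1 e (Finset.mem_filter.1 h).1
  · intro v
    have h1 := bd_filter (symmDiff F A) (Inside K) v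
    rw [hin, bd_symmDiff, hbA] at h1
    have h2 : bd ((symmDiff F A).filter (fun e => ¬ Inside K e) ∪ J.filter (Inside K)) v =
        bd ((symmDiff F A).filter fun e => ¬ Inside K e) v + bd (J.filter (Inside K)) v :=
      Finset.sum_union hdisj
    rw [h2]
    by_cases hv : v ∈ K
    · have h3 := bd_inside_of_mem hv fun e h _ => hJK e h
      have h4 := bd_inside_of_mem_of_cross hu hs he hF hv
      have h5 : pt r v = 0 := pt_of_ne fun h => hr (h ▸ hv)
      rw [hJ.2, Pi.add_apply, h5] at h3
      rw [h3]
      rw [h4] at h1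
      linear_combination -h1 - zmod2_add_self (pt u v)
    · have h3 := bd_inside_of_notMem J hv
      have h4 := bd_inside_of_notMem F hv
      have h5 : pt u v = 0 := pt_of_ne fun h => hv (h ▸ hu)
      have h6 : pt y v = 0 := pt_of_ne fun h => hv (h ▸ hy)
      rw [h4] at h1
      rw [h3, h5, h6]
      linear_combination -h1
  · have c1 := Finset.card_filter_add_card_filter_not (s := symmDiff F A) (Inside K)
    have c2 := card_symmDiff F A
    rw [hin] at c1
    rw [Finset.card_union_of_disjoint hdisj]
    push_cast
    omega
  · intro e h
    simp [h]

variable [Fintype V]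

open Classical in
/-- Two optimal edge sets have the same number of edges inside `K` if the end of each lies
outside `K` or at the top level `k`. -/
theorem card_inside_top (hbip : G.Colorable 2) {k : ℕ} {K : Set V}
    (hK : IsComponentOf G (Sub G τ k) K) {x y : V} {I J : Finset (Sym2 V)}
    (hI : IsOpt G τ x I) (hJ : IsOpt G τ y J)
    (hx : ∀ j < k, x ∈ K → x ∉ Sub G τ j) (hy : ∀ j < k, y ∈ K → y ∉ Sub G τ j) :
    (I.filter (Inside K)).card = (J.filter (Inside K)).card := by
  have key : ∀ v ∈ K, ∀ j < k, v ∈ Sub G τ j → bd I v = bd J v := by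
    intro v hv j hj hvj
    have h1 : pt x v = 0 := pt_of_ne fun h => hx j hj (h ▸ hv) (h ▸ hvj)
    have h2 : pt y v = 0 := pt_of_ne fun h => hy j hj (h ▸ hv) (h ▸ hvj)
    rw [hI.1.2, hJ.1.2, h1, h2]
  exact le_antisymm (count_inside hbip hK hI hJ.1.1 fun v h1 j h2 h3 => (key v h1 j h2 h3).symm)
    (count_inside hbip hK hJ hI.1.1 key)

open Classical in
/-- A path `p` entering `K` weighs at least as much as its part `A` before the entry vertex `z`,
plus the increase in the number of edges inside `K` from `F` to an optimal edge set at the end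
of `p`. -/
theorem path_bound (hbip : G.Colorable 2) {F : Finset (Sym2 V)} {k : ℕ} {K : Set V} {r : V}
    (hF : IsOpt G (bd F + pt r) r F) (hr : r ∉ K)
    (hK : IsComponentOf G (Sub G (bd F + pt r) k) K) {a x : V} (ha : a ∉ K) (hx : x ∈ K)
    {J : Finset (Sym2 V)} (hJ : IsOpt G (bd F + pt r) x J) (p : G.Walk a x) (hp : p.IsPath) :
    ∃ z ∈ K, ∃ (f : Sym2 V) (A : Finset (Sym2 V)), (∀ e ∈ A, e ∈ G.edgeSet) ∧
      (∀ v, bd A v = pt a v + pt z v) ∧ f ∈ A ∧ z ∈ f ∧ (∀ e ∈ A, ¬ Inside K e) ∧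
      (∀ e ∈ A, Crosses K e → e = f) ∧ (∀ j < k, z ∉ Sub G (bd F + pt r) j) ∧
      wt F A + (J.filter (Inside K)).card - (F.filter (Inside K)).card
        ≤ wt F p.edges.toFinset := by
  have hpn := hp.isTrail.edges_nodup
  obtain ⟨z, hz, f, A, B, hAB, hdisj, hbA, hbB, hfA, hzf, hfc, hAin, hAc⟩ :=
    split_path p hpn ha ⟨x, p.end_mem_support, hx⟩
  have hpG := edges_sub p
  have hAG : ∀ e ∈ A, e ∈ G.edgeSet := fun e h => hpG e (hAB ▸ Finset.mem_union_left _ h)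
  have hBp : ∀ e ∈ B, e ∈ p.edges.toFinset := fun e h => hAB ▸ Finset.mem_union_right _ h
  have hcut : ∀ e ∈ G.edgeSet, Crosses K e → ∀ v ∈ e, v ∈ K → ∀ j < k,
      v ∉ Sub G (bd F + pt r) j := by
    intro e he hc v hve hv j hj
    obtain ⟨c, d, rfl, hcK, hdK, hcd⟩ := hc.exists_ends he
    rcases Sym2.mem_iff.1 hve with rfl | rfl
    · exact cut_level hK hv hdK hcd hj
    · exact absurd hv hdK
  have hztop := hcut f (hAG f hfA) hfc z hzf hz
  refine ⟨z, hz, f, A, hAG, hbA, hfA, hzf, hAin, hAc, hztop, ?_⟩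
  have hw : wt F B = wt F (B.filter (Inside K)) + wt F (B.filter fun e => ¬ Inside K e) :=
    (Finset.sum_filter_add_sum_filter_not B _ _).symm
  have hout : 0 ≤ wt F (B.filter fun e => ¬ Inside K e) := by
    refine count_outside hbip hK hF (fun e h => hpG e (hBp e (Finset.mem_filter.1 h).1))
      (fun e h => (Finset.mem_filter.1 h).2) ?_ fun v hv => ?_
    · intro e h v hv
      have he := List.mem_toFinset.1 (hBp e (Finset.mem_filter.1 h).1)
      exact hJ.1.feasible p v (Walk.mem_support_of_mem_edges he hv)
    · have h1 := bd_filter B (Inside K) v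
      have h2 : pt z v = 0 := pt_of_ne fun h => hv (h ▸ hz)
      have h3 : pt x v = 0 := pt_of_ne fun h => hv (h ▸ hx)
      rw [bd_inside_of_notMem B hv, hbB, h2, h3] at h1
      linear_combination -h1
  have hBin : ∀ e ∈ B.filter (Inside K), e ∈ G.edgeSet := fun e h =>
    hpG e (hBp e (Finset.mem_filter.1 h).1)
  have hin := count_inside hbip hK hJ (S := symmDiff F (B.filter (Inside K)))
    (symmDiff_sub hF.1.1 hBin) fun v hv j hj hvj => by
      have h1 := bd_inside_of_mem (J := B) hv fun e he hve hc =>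
        hcut e (hpG e (hBp e he)) hc v hve hv j hj hvj
      have h2 : pt z v = 0 := pt_of_ne fun h => hztop j hj (h ▸ hvj)
      have h3 : pt r v = 0 := pt_of_ne fun h => hr (h ▸ hv)
      rw [bd_symmDiff, h1, hbB, hJ.1.2, Pi.add_apply, h2, h3]
      ring
  have hS := card_inside_of_agree (K := K) (J := symmDiff F (B.filter (Inside K))) (J' := F)
    fun e he => by simp [Finset.mem_symmDiff, he]
  rw [card_symmDiff] at hS
  rw [hAB, wt_union F hdisj, hw]
  omega

end Exchange

/-! ### Moving the root -/

/-- The theorem in terms of edge sets: `F` is a minimum join, and `K` is a component of a level set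
of `F` and `r`. -/
theorem dist_sub_dist [DecidableEq V] [Fintype V] {G : SimpleGraph V} (hbip : G.Colorable 2)
    {F : Finset (Sym2 V)} (hF : IsMinSet G F) {r : V} {K : Set V} (hr : r ∉ K) {k : ℕ}
    (hK : IsComponentOf G (Sub G (bd F + pt r) k) K) {u s : V} (hus : G.Adj u s)
    (he : s(u, s) ∈ F) (hu : u ∈ K) (hs : s ∉ K) {a : V} (ha : a ∉ K) (hau : G.Reachable a u)
    (hcong : distF G (F : Set (Sym2 V)) a u = distF G (F : Set (Sym2 V)) a s - 1)
    {x : V} (hx : x ∈ K) :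
    distF G (F : Set (Sym2 V)) a x - distF G (F : Set (Sym2 V)) a u =
      distF G (F : Set (Sym2 V)) r x - distF G (F : Set (Sym2 V)) r u := by
  classical
  have hFr := hF.isOpt r
  have hec : Crosses K s(u, s) := crosses_iff.2 (Or.inl ⟨hu, hs⟩)
  have hFc : ∀ e ∈ F, Crosses K e → e = s(u, s) := fun e h hc =>
    cross_unique hbip hK hFr he h hec hc
  have hutop : ∀ j < k, u ∉ Sub G (bd F + pt r) j := fun j hj => cut_level hK hu hs hus hj
  obtain ⟨I, hI, -⟩ := hK.2.1 hu
  obtain ⟨Ju, hJu, -⟩ := hI.exists_opt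
  obtain ⟨Jx, hJx, hagree⟩ := transport hbip hK hu hx hJu
  -- A top vertex of `K` has an optimal edge set with as many edges inside `K` as `F`.
  have htop : ∀ z ∈ K, (∀ j < k, z ∉ Sub G (bd F + pt r) j) → ∀ J,
      IsOpt G (bd F + pt r) z J →
      (J.filter (Inside K)).card = (F.filter (Inside K)).card := fun z _ hz J hJ =>
    card_inside_top hbip hK hJ hFr (fun j hj _ => hz j hj) fun _ _ h => absurd h hr
  have hJu0 := htop u hu hutop Ju hJu
  have hJx0 := card_inside_of_agree hagree
  have hcu := hF.card_opt hJu
  have hcx := hF.card_opt hJx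
  have hax : G.Reachable a x := hau.trans
    ((hF.mem_sub.1 (hK.2.1 hu)).1.symm.trans (hF.mem_sub.1 (hK.2.1 hx)).1)
  -- The exchange at the entry vertex itself turns the first part of a path into a path to `u`.
  have hentry : ∀ z ∈ K, (∀ j < k, z ∉ Sub G (bd F + pt r) j) → ∀ A : Finset (Sym2 V),
      (∀ e ∈ A, e ∈ G.edgeSet) → (∀ v, bd A v = pt a v + pt z v) →
      (∀ e ∈ A, ¬ Inside K e) →
      ∃ M, IsJ G (bd F + pt a) u M ∧ (M.card : ℤ) = F.card + wt F A ∧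
        ∀ e, ¬ Inside K e → (e ∈ M ↔ e ∈ symmDiff F A) := by
    intro z hz hzt A hA hbA hAin
    obtain ⟨I, hI, -⟩ := hK.2.1 hz
    obtain ⟨J, hJ, -⟩ := hI.exists_opt
    obtain ⟨M, h1, h2, h3, h4⟩ := exchange hF.1 hu hs he hFc hr hz hJ.1
      (fun e h => no_cross hbip hK hz hJ h) hA hAin hbA
    have h5 := htop z hz hzt J hJ
    refine ⟨M, ⟨h1, fun v => ?_⟩, by omega, h4⟩
    rw [h2, Pi.add_apply]
    linear_combination zmod2_add_self (pt z v)
  refine le_antisymm ?_ ?_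
  · obtain ⟨p, hp, hpw⟩ := distF_attained F hau
    obtain ⟨z, hz, f, A, hA, hbA, hfA, hzf, hAin, hAc, hzt, hle⟩ :=
      path_bound hbip hFr hr hK ha hu hJu p hp
    obtain ⟨M, hM, hMc, hMm⟩ := hentry z hz hzt A hA hbA hAin
    -- If the path enters `K` off the beam, the exchange keeps the beam; deleting it reaches `s`
    -- at a smaller distance than `u`, against congruence.
    have hf : f = s(u, s) := by
      by_contra hne
      have heA : s(u, s) ∉ A := fun h => hne (hAc _ h hec).symm
      have heM : s(u, s) ∈ M := (hMm _ fun h => h.not_crosses hec).2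
        (Finset.mem_symmDiff.2 (Or.inl ⟨he, heA⟩))
      have h1 := card_adj_of_mem heM
      have h2 := (hF.dist_le (hM.adj hus)).2
      omega
    have hzu : z = u := by
      subst hf
      rcases Sym2.mem_iff.1 hzf with h | h
      · exact h
      · exact absurd (h ▸ hz) hs
    subst hzu
    obtain ⟨N, h1, h2, h3, -⟩ := exchange hF.1 hu hs he hFc hr hx hJx.1
      (fun e h => no_cross hbip hK hx hJx h) hA hAin hbA
    have h4 := (hF.dist_le (J := N) (a := a) (b := x) ⟨h1, fun v => by
      rw [h2, Pi.add_apply]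
      linear_combination zmod2_add_self (pt z v)⟩).2
    omega
  · obtain ⟨p, hp, hpw⟩ := distF_attained F hax
    obtain ⟨z, hz, f, A, hA, hbA, hfA, hzf, hAin, hAc, hzt, hle⟩ :=
      path_bound hbip hFr hr hK ha hx hJx p hp
    obtain ⟨M, hM, hMc, -⟩ := hentry z hz hzt A hA hbA hAin
    have h1 := (hF.dist_le hM).2
    omega

/-- With `K` a decapital distance component w.r.t. `r`, `F`-root `rK`,
`r' ∉ K` `K`-congruent to `r`, and `d := dist_F(r', rK) - dist_F(r, rK)`:
for every `x ∈ K`, `dist_F(r', x) = dist_F(r, x) + d`. -/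
theorem stmt_4 {V : Type*} [Fintype V] [DecidableEq V]
    (G : SimpleGraph V) (T : Set V) (hbip : G.Colorable 2) (hgraft : IsGraft G T)
    (F : Set (Sym2 V)) (hF : IsMinJoin G T F)
    (r : V) (K : Set V) (hK : IsDecapDistComp G F r K)
    (rK sK : V) (hadj : G.Adj rK sK) (hbeam : s(rK, sK) ∈ F)
    (hrK : rK ∈ K) (hsK : sK ∉ K)
    (r' : V) (hr' : r' ∉ K)
    (hcong : distF G F r' rK = distF G F r' sK - 1)
    (d : ℤ) (hd : d = distF G F r' rK - distF G F r rK) :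
    ∀ x ∈ K, distF G F r' x = distF G F r x + d := by
  classical
  obtain ⟨F', rfl⟩ : ∃ F' : Finset (Sym2 V), (F' : Set (Sym2 V)) = F :=
    ⟨F.toFinite.toFinset, by simp⟩
  have hM := IsMinJoin.isMinSet hF
  obtain ⟨i, ⟨-, hne, hKi, hKc, hKcl⟩, hrnot⟩ := hK
  -- If `K` were not connected to `r`, both ends of the beam would have the conventional distance 0.
  have hreach : G.Reachable r rK := by
    by_contra hn
    have h1 := distF_of_not_reachable (F' : Set (Sym2 V)) hn
    have h2 := distF_of_not_reachable (F' : Set (Sym2 V))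
      (fun h => hn (h.trans hadj.symm.reachable) : ¬ G.Reachable r sK)
    have h3 : distF G (F' : Set (Sym2 V)) r rK ≤ i := hKi hrK
    exact hsK (hKcl rK hrK sK (show distF G (F' : Set (Sym2 V)) r sK ≤ i by omega) hadj)
  have hreach' : G.Reachable r' rK := by
    by_contra hn
    have h1 := distF_of_not_reachable (F' : Set (Sym2 V)) hn
    have h2 := distF_of_not_reachable (F' : Set (Sym2 V))
      (fun h => hn (h.trans hadj.symm.reachable) : ¬ G.Reachable r' sK)
    omega
  have hi : 0 ≤ F'.card + i := by
    obtain ⟨J, -, hJ⟩ := hM.exists_isJ hreach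
    have h3 : distF G (F' : Set (Sym2 V)) r rK ≤ i := hKi hrK
    omega
  have hK' : IsComponentOf G (Sub G (bd F' + pt r) (F'.card + i).toNat) K := by
    refine ⟨hne, fun y hy => hM.mem_sub.2 ⟨?_, ?_⟩, hKc, fun y hy z hz hyz => ?_⟩
    · exact hreach.trans ((hKc.preconnected ⟨rK, hrK⟩ ⟨y, hy⟩).map
        (SimpleGraph.Embedding.induce K).toHom)
    · have h3 : distF G (F' : Set (Sym2 V)) r y ≤ i := hKi hy
      omega
    · have h3 := (hM.mem_sub.1 hz).2
      exact hKcl y hy z (show distF G (F' : Set (Sym2 V)) r z ≤ i by omega) hyz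
  intro x hx
  have := dist_sub_dist hbip hM hrnot hK' hadj (by simpa using hbeam) hrK hsK hr' hreach' hcong hx
  omega
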